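/- arXiv:2304.02124 — 2 statements merged into one kernel-verified Lean document; each statement's English description precedes it below -/
import Mathlib

section
/- Bounds on the weighted regression solution arising in mixed (2,∞)-norm minimization: Let r, s ∈ ℝⁿ with r, s ≥ 0 entrywise, A ∈ ℝ^{n×d}, b ∈ ℝ^d, and w ∈ ℝⁿ with w ≥ 0 entrywise and w ≠ 0. Define w̃ ∈ ℝⁿ by w̃ᵢ := ‖w‖₁·rᵢ + (wᵢ + ‖w‖₁/n)·sᵢ². Suppose Δ̄ ∈ ℝⁿ satisfies AᵀΔ̄ = b and ‖Δ̄‖_r² + ‖s⊙Δ̄‖_∞ ≤ 1, and let Δ̂ ∈ ℝⁿ satisfy AᵀΔ̂ = b and ‖Δ̂‖_{w̃}² ≤ ‖Δ‖_{w̃}² for every Δ with AᵀΔ = b. Then: (1) ‖Δ̂‖_{w̃}² ≤ 6·‖w‖₁; (2) ‖Δ̂‖_r² ≤ 6; (3) Σᵢ wᵢ·|sᵢ·Δ̂ᵢ| ≤ √6·‖w‖₁; and (4) |sᵢ·Δ̂ᵢ| ≤ √(6n) for every index i. -/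
/-!
Write `W = ‖w‖₁`. The weighted energy splits (`wsq_split`) as
`W ‖Δ‖_r² + Σ wᵢ (sᵢ Δᵢ)² + (W / n) Σ (sᵢ Δᵢ)²`, a sum of three nonnegative terms.
At the feasible point `Δbar` the first term is at most `W`, and each of the other two is at most
`W ‖s ⊙ Δbar‖_∞² ≤ W`, so by minimality the energy of `Δhat` is at most `3 W ≤ 6 W`.
Bounding each of the three terms at `Δhat` separately by `6 W` gives the remaining claims, the one on
`Σ wᵢ |sᵢ Δᵢ|` after an application of Cauchy–Schwarz.
-/

open Matrix

/-- Weighted square norm: `‖Δ‖_u² = Σᵢ uᵢ Δᵢ²`. -/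
noncomputable def wsq {ι : Type*} [Fintype ι] (u Δ : ι → ℝ) : ℝ :=
  ∑ i, u i * (Δ i) ^ 2

/-- The `∞`-norm of a vector: `‖v‖_∞ = maxᵢ |vᵢ|`. -/
noncomputable def linfNorm {ι : Type*} [Fintype ι] (v : ι → ℝ) : ℝ :=
  ⨆ i, |v i|

/-- The `1`-norm of a vector: `‖v‖₁ = Σᵢ |vᵢ|`. -/
noncomputable def l1Norm {ι : Type*} [Fintype ι] (v : ι → ℝ) : ℝ :=
  ∑ i, |v i|

theorem wsq_split {n : ℕ} (r s w wt : Fin n → ℝ) (W : ℝ)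
    (hwt : ∀ i, wt i = W * r i + (w i + W / (n : ℝ)) * (s i) ^ 2) (Δ : Fin n → ℝ) :
    wsq wt Δ = W * wsq r Δ + ∑ i, w i * (s i * Δ i) ^ 2
      + W / n * ∑ i, (s i * Δ i) ^ 2 := by
  simp only [wsq, Finset.mul_sum, ← Finset.sum_add_distrib]
  refine Finset.sum_congr rfl fun i _ => ?_
  rw [hwt i]
  ring

theorem wsq_nonneg {n : ℕ} {u : Fin n → ℝ} (hu : ∀ i, 0 ≤ u i) (Δ : Fin n → ℝ) :
    0 ≤ wsq u Δ :=
  Finset.sum_nonneg fun i _ => mul_nonneg (hu i) (sq_nonneg _)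

theorem abs_le_linfNorm {n : ℕ} (v : Fin n → ℝ) (i : Fin n) : |v i| ≤ linfNorm v :=
  le_ciSup (f := fun i => |v i|) (Set.finite_range _).bddAbove i

/-- Bounds on the weighted regression solution arising in mixed `(2,∞)`-norm minimization. -/
theorem mwu_weighted_regression_bounds
    {n d : ℕ}
    (r s : Fin n → ℝ) (hr : ∀ i, 0 ≤ r i) (hs : ∀ i, 0 ≤ s i)
    (A : Matrix (Fin n) (Fin d) ℝ) (b : Fin d → ℝ)
    (w : Fin n → ℝ) (hw : ∀ i, 0 ≤ w i) (hw0 : w ≠ 0)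
    (wt : Fin n → ℝ)
    (hwt : ∀ i, wt i = l1Norm w * r i + (w i + l1Norm w / (n : ℝ)) * (s i) ^ 2)
    (Δbar : Fin n → ℝ)
    (hΔbar_feas : Aᵀ *ᵥ Δbar = b)
    (hΔbar : wsq r Δbar + linfNorm (s * Δbar) ≤ 1)
    (Δhat : Fin n → ℝ)
    (hΔhat_feas : Aᵀ *ᵥ Δhat = b)
    (hΔhat_min : ∀ Δ : Fin n → ℝ, Aᵀ *ᵥ Δ = b → wsq wt Δhat ≤ wsq wt Δ) :
    wsq wt Δhat ≤ 6 * l1Norm w ∧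
    wsq r Δhat ≤ 6 ∧
    (∑ i, w i * |s i * Δhat i|) ≤ Real.sqrt 6 * l1Norm w ∧
    ∀ i, |s i * Δhat i| ≤ Real.sqrt (6 * n) := by
  have hl1 : l1Norm w = ∑ i, w i := Finset.sum_congr rfl fun i _ => abs_of_nonneg (hw i)
  obtain ⟨j, hj⟩ : ∃ j, w j ≠ 0 := Function.ne_iff.mp hw0
  have hWpos : 0 < l1Norm w := by
    rw [hl1]
    exact Finset.sum_pos' (fun i _ => hw i)
      ⟨j, Finset.mem_univ j, lt_of_le_of_ne (hw j) (Ne.symm hj)⟩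
  have hn : (0 : ℝ) < n := Nat.cast_pos.mpr j.pos
  have hsplit := wsq_split r s w wt (l1Norm w) hwt
  generalize l1Norm w = W at *
  have hM0 : 0 ≤ linfNorm (s * Δbar) := (abs_nonneg _).trans (abs_le_linfNorm _ j)
  have hR0 : 0 ≤ wsq r Δbar := wsq_nonneg hr _
  have hsq : ∀ i, (s i * Δbar i) ^ 2 ≤ 1 := fun i => by
    have h1 : |s i * Δbar i| ≤ linfNorm (s * Δbar) := abs_le_linfNorm (s * Δbar) i
    rw [sq_le_one_iff_abs_le_one]
    linarith
  have hbar : wsq wt Δbar ≤ 3 * W := by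
    have h1 : ∑ i, w i * (s i * Δbar i) ^ 2 ≤ W := by
      rw [hl1]
      exact Finset.sum_le_sum fun i _ => mul_le_of_le_one_right (hw i) (hsq i)
    have h2 : ∑ i, (s i * Δbar i) ^ 2 ≤ (n : ℝ) := by
      simpa using Finset.sum_le_card_nsmul Finset.univ _ 1 fun i _ => hsq i
    have h3 : W / n * ∑ i, (s i * Δbar i) ^ 2 ≤ W := by
      calc _ ≤ W / n * n := by gcongr
        _ = W := by field_simp
    have h4 : W * wsq r Δbar ≤ W := mul_le_of_le_one_right hWpos.le (by linarith)
    rw [hsplit]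
    linarith
  have hhat : wsq wt Δhat ≤ 6 * W := by linarith [hΔhat_min Δbar hΔbar_feas]
  have hE := hsplit Δhat
  have hp1 : 0 ≤ W * wsq r Δhat := mul_nonneg hWpos.le (wsq_nonneg hr _)
  have hp2 : 0 ≤ ∑ i, w i * (s i * Δhat i) ^ 2 :=
    Finset.sum_nonneg fun i _ => mul_nonneg (hw i) (sq_nonneg _)
  have hp3 : 0 ≤ W / n * ∑ i, (s i * Δhat i) ^ 2 :=
    mul_nonneg (by positivity) (Finset.sum_nonneg fun i _ => sq_nonneg _)
  refine ⟨hhat, ?_, ?_, fun i => ?_⟩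
  · refine le_of_mul_le_mul_left ?_ hWpos
    linarith
  · -- Cauchy–Schwarz in the form `(Σ wᵢ aᵢ)² ≤ (Σ wᵢ) (Σ wᵢ aᵢ²)`
    have hcs : (∑ i, w i * |s i * Δhat i|) ^ 2
        ≤ (∑ i, w i) * ∑ i, w i * (s i * Δhat i) ^ 2 := by
      refine Finset.sum_sq_le_sum_mul_sum_of_sq_le_mul _ (fun i _ => hw i)
        (fun i _ => mul_nonneg (hw i) (sq_nonneg _)) fun i _ => ?_
      rw [mul_pow, sq_abs]
      exact le_of_eq (by ring)
    rw [← hl1] at hcs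
    refine abs_le_of_sq_le_sq' ?_ (by positivity) |>.2
    rw [mul_pow, Real.sq_sqrt (by norm_num)]
    have : W * ∑ i, w i * (s i * Δhat i) ^ 2 ≤ W * (6 * W) :=
      mul_le_mul_of_nonneg_left (by linarith) hWpos.le
    linarith
  · apply Real.abs_le_sqrt
    have h1 : (s i * Δhat i) ^ 2 ≤ ∑ i, (s i * Δhat i) ^ 2 :=
      Finset.single_le_sum (f := fun i => (s i * Δhat i) ^ 2)
        (fun i _ => sq_nonneg _) (Finset.mem_univ i)
    refine h1.trans (le_of_mul_le_mul_left ?_ (div_pos hWpos hn))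
    have h2 : W / n * (6 * n) = 6 * W := by field_simp
    linarith
end

section
/- Monotone growth of the constrained weighted quadratic optimum under weight increase: Let A ∈ ℝ^{n×d} have full column rank, let b ∈ ℝ^d, and let w⁽¹⁾, w⁽²⁾ ∈ ℝⁿ with 0 < w⁽¹⁾ᵢ ≤ w⁽²⁾ᵢ for all i. For j = 1, 2 let W⁽ʲ⁾ be the diagonal matrix of w⁽ʲ⁾ and let Δ⁽ʲ⁾ := (W⁽ʲ⁾)⁻¹ A (Aᵀ (W⁽ʲ⁾)⁻¹ A)⁻¹ b be the minimizer of ½‖Δ‖²_{w⁽ʲ⁾} over {Δ : AᵀΔ = b}. Then ½‖Δ⁽²⁾‖²_{w⁽²⁾} ≥ ½‖Δ⁽¹⁾‖²_{w⁽¹⁾} + ¼·Σᵢ ((w⁽²⁾ᵢ − w⁽¹⁾ᵢ)/w⁽²⁾ᵢ)·w⁽¹⁾ᵢ·(Δ⁽¹⁾ᵢ)². -/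
/-!
Put `W = diag w1` and `x = (Aᵀ W⁻¹ A)⁻¹ b`. Then `W Δ1 = A x`, so every feasible `Δ` satisfies
`⟨W Δ1, Δ⟩ = ⟨x, AᵀΔ⟩ = ⟨x, b⟩`; comparing `Δ2` with `Δ1` gives `Σ w1 Δ1 Δ2 = Σ w1 Δ1²`.
Summing the coordinatewise inequality `w2 Δ2² ≥ 2 w1 Δ1 Δ2 - (w1² / w2) Δ1²`
(the square of `w2 Δ2 - w1 Δ1`, divided by `w2`) yields
`‖Δ2‖²_{w2} ≥ ‖Δ1‖²_{w1} + Σ ((w2 - w1) / w2) w1 Δ1²`, which is the claim with constant `1/2`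
in place of `1/4`.
-/

open Matrix

/-- Full column rank makes the weighted Gram matrix positive definite, hence invertible. -/
lemma isUnit_det_weighted_gram {n d : ℕ} (A : Matrix (Fin n) (Fin d) ℝ)
    (hA : IsUnit (Aᵀ * A).det) (w : Fin n → ℝ) (hw : ∀ i, 0 < w i) :
    IsUnit (Aᵀ * (Matrix.diagonal w)⁻¹ * A).det := by
  have hinj : Function.Injective A.mulVec := by
    have h := Matrix.mulVec_injective_of_isUnit ((Matrix.isUnit_iff_isUnit_det _).2 hA)
    intro x y hxy
    apply h
    simp only [← Matrix.mulVec_mulVec]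
    exact congrArg _ hxy
  have hD : (Matrix.diagonal w).PosDef := Matrix.PosDef.diagonal hw
  have h := hD.inv.conjTranspose_mul_mul_same hinj
  rw [Matrix.conjTranspose_eq_transpose_of_trivial] at h
  exact h.det_pos.ne'.isUnit

lemma transpose_mulVec_minimizer {n d : ℕ} (A : Matrix (Fin n) (Fin d) ℝ)
    (hA : IsUnit (Aᵀ * A).det) (b : Fin d → ℝ) (w : Fin n → ℝ) (hw : ∀ i, 0 < w i) :
    Aᵀ *ᵥ (((Matrix.diagonal w)⁻¹ * A * (Aᵀ * (Matrix.diagonal w)⁻¹ * A)⁻¹) *ᵥ b) = b := by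
  rw [Matrix.mulVec_mulVec, ← Matrix.mul_assoc, ← Matrix.mul_assoc,
    Matrix.mul_nonsing_inv _ (isUnit_det_weighted_gram A hA w hw), Matrix.one_mulVec]

/-- Stationarity: the minimizer `Δ` satisfies `W Δ = A x`, with multiplier `x = (Aᵀ W⁻¹ A)⁻¹ b`. -/
lemma diagonal_mulVec_minimizer {n d : ℕ} (A : Matrix (Fin n) (Fin d) ℝ)
    (b : Fin d → ℝ) (w : Fin n → ℝ) (hw : ∀ i, 0 < w i) :
    Matrix.diagonal w *ᵥ (((Matrix.diagonal w)⁻¹ * A * (Aᵀ * (Matrix.diagonal w)⁻¹ * A)⁻¹) *ᵥ b)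
      = A *ᵥ ((Aᵀ * (Matrix.diagonal w)⁻¹ * A)⁻¹ *ᵥ b) := by
  have hD : IsUnit (Matrix.diagonal w).det :=
    (Matrix.PosDef.diagonal hw).det_pos.ne'.isUnit
  rw [Matrix.mulVec_mulVec, Matrix.mulVec_mulVec, ← Matrix.mul_assoc, ← Matrix.mul_assoc,
    Matrix.mul_nonsing_inv _ hD, Matrix.one_mul]

/-- Monotone growth of the constrained weighted quadratic optimum under weight increase. -/
theorem weighted_quadratic_monotone_growth
    {n d : ℕ}
    (A : Matrix (Fin n) (Fin d) ℝ) (hA : IsUnit (Aᵀ * A).det)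
    (b : Fin d → ℝ)
    (w1 w2 : Fin n → ℝ)
    (hw1 : ∀ i, 0 < w1 i) (hw12 : ∀ i, w1 i ≤ w2 i)
    (Δ1 Δ2 : Fin n → ℝ)
    (hΔ1 : Δ1 = ((Matrix.diagonal w1)⁻¹ * A * (Aᵀ * (Matrix.diagonal w1)⁻¹ * A)⁻¹) *ᵥ b)
    (hΔ2 : Δ2 = ((Matrix.diagonal w2)⁻¹ * A * (Aᵀ * (Matrix.diagonal w2)⁻¹ * A)⁻¹) *ᵥ b) :
    1 / 2 * wsq w1 Δ1 + 1 / 4 * ∑ i, (w2 i - w1 i) / w2 i * w1 i * (Δ1 i) ^ 2 ≤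
      1 / 2 * wsq w2 Δ2 := by
  have f1 : Aᵀ *ᵥ Δ1 = b := hΔ1 ▸ transpose_mulVec_minimizer A hA b w1 hw1
  have f2 : Aᵀ *ᵥ Δ2 = b :=
    hΔ2 ▸ transpose_mulVec_minimizer A hA b w2 fun i => (hw1 i).trans_le (hw12 i)
  obtain ⟨x, hx⟩ : ∃ x, Matrix.diagonal w1 *ᵥ Δ1 = A *ᵥ x :=
    ⟨_, hΔ1 ▸ diagonal_mulVec_minimizer A b w1 hw1⟩
  have key : ∀ Δ, Aᵀ *ᵥ Δ = b → ∑ i, w1 i * Δ1 i * Δ i = x ⬝ᵥ b := by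
    intro Δ hΔ
    have h1 : ∑ i, w1 i * Δ1 i * Δ i = (Matrix.diagonal w1 *ᵥ Δ1) ⬝ᵥ Δ := by
      simp [dotProduct, Matrix.mulVec_diagonal]
    rw [h1, hx, ← hΔ, Matrix.dotProduct_mulVec, Matrix.vecMul_transpose]
  have hcross : ∑ i, w1 i * Δ1 i * Δ2 i = ∑ i, w1 i * Δ1 i * Δ1 i :=
    (key Δ2 f2).trans (key Δ1 f1).symm
  have hsum : ∑ i, (2 * (w1 i * Δ1 i * Δ2 i) - w1 i * Δ1 i * Δ1 i
      + (w2 i - w1 i) / w2 i * w1 i * (Δ1 i) ^ 2) ≤ ∑ i, w2 i * (Δ2 i) ^ 2 := by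
    refine Finset.sum_le_sum fun i _ => ?_
    have h2 : 0 < w2 i := (hw1 i).trans_le (hw12 i)
    have hsq : 0 ≤ (w2 i * Δ2 i - w1 i * Δ1 i) ^ 2 / w2 i := by positivity
    have heq : (w2 i * Δ2 i - w1 i * Δ1 i) ^ 2 / w2 i = w2 i * (Δ2 i) ^ 2 -
        (2 * (w1 i * Δ1 i * Δ2 i) - w1 i * Δ1 i * Δ1 i
          + (w2 i - w1 i) / w2 i * w1 i * (Δ1 i) ^ 2) := by
      field_simp
      ring
    linarith
  have hnonneg : 0 ≤ ∑ i, (w2 i - w1 i) / w2 i * w1 i * (Δ1 i) ^ 2 := by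
    refine Finset.sum_nonneg fun i _ => ?_
    have h1 := hw1 i
    have h2 : 0 < w2 i := h1.trans_le (hw12 i)
    have h3 : 0 ≤ w2 i - w1 i := sub_nonneg.2 (hw12 i)
    positivity
  have hE : wsq w1 Δ1 = ∑ i, w1 i * Δ1 i * Δ1 i :=
    Finset.sum_congr rfl fun i _ => by ring
  rw [Finset.sum_add_distrib, Finset.sum_sub_distrib, ← Finset.mul_sum, hcross] at hsum
  rw [hE, wsq]
  linarith
end
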